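/- Let r > 0, L > 0 and k_I > 0 be real numbers. Then every complex root s of the characteristic equation k_I + s·e^{sL/r} = 0 has negative real part (Re s < 0) if and only if k_I < rπ/(2L). -/

import Mathlib

/-!
Rescaling by the delay `L / r` turns the characteristic equation into `z * exp z = -a` with
`a = kI * L / r`.

If `z` is a root with `0 ≤ z.re`, then `|z.im| ≤ ‖z‖ = a * exp (-z.re) ≤ a`. For `a < π / 2` this
gives `0 < cos z.im`, so the real part of `z = -a * exp (-z)` is negative, a contradiction.

Conversely, `z = -y cot y + i y = -(y / sin y) * exp (-i y)` solves `z * exp z = -a` with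
`a = (y / sin y) * exp (-y cot y)`. As `y` runs over `[π / 2, π)`, the real part `-y cot y` is
nonnegative and `a` takes every value in `[π / 2, ∞)`.
-/

open Set
open Real (sin cos cot)
open scoped Real

section SmallGain

variable {a : ℝ} {w z : ℂ}

lemma eq_neg_mul_exp_neg_of_mul_exp_eq_neg (hz : z * Complex.exp z = -w) :
    z = -(w * Complex.exp (-z)) := by
  rw [← neg_mul, ← hz, mul_assoc, ← Complex.exp_add, add_neg_cancel, Complex.exp_zero, mul_one]

lemma norm_le_norm_of_mul_exp_eq_neg (hz : z * Complex.exp z = -w) (hre : 0 ≤ z.re) :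
    ‖z‖ ≤ ‖w‖ :=
  calc ‖z‖ ≤ ‖z‖ * Real.exp z.re := le_mul_of_one_le_right (norm_nonneg z) (Real.one_le_exp hre)
    _ = ‖w‖ := by rw [← Complex.norm_exp, ← norm_mul, hz, norm_neg]

lemma re_neg_of_mul_exp_eq_neg (ha₀ : 0 < a) (ha : a < π / 2) (hz : z * Complex.exp z = -a) :
    z.re < 0 := by
  by_contra! hre
  have him : |z.im| < π / 2 :=
    calc |z.im| ≤ ‖z‖ := Complex.abs_im_le_norm z
      _ ≤ ‖(a : ℂ)‖ := norm_le_norm_of_mul_exp_eq_neg hz hre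
      _ = a := Complex.norm_of_nonneg ha₀.le
      _ < π / 2 := ha
  have hcos : 0 < cos z.im := Real.cos_pos_of_mem_Ioo (abs_lt.mp him)
  have hre_eq : z.re = -(a * (Real.exp (-z.re) * cos z.im)) := by
    simpa [Complex.exp_re] using congrArg Complex.re (eq_neg_mul_exp_neg_of_mul_exp_eq_neg hz)
  have : 0 < a * (Real.exp (-z.re) * cos z.im) := by positivity
  linarith

end SmallGain

section LargeGain

variable {a y : ℝ}

/-- The curve `-y cot y + i y`, which parametrizes by their imaginary part `y` the nonreal points
`z` at which `z * exp z` is real. At multiples of `π` the value comes from division by zero. -/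
noncomputable def rootCurve (y : ℝ) : ℂ := ⟨-(y * cot y), y⟩

/-- The gain `a` for which `rootCurve y` solves `z * exp z = -a`. At multiples of `π` the value
comes from division by zero. -/
noncomputable def rootGain (y : ℝ) : ℝ := y / sin y * Real.exp (-(y * cot y))

lemma rootCurve_eq_neg_mul_exp (hy : sin y ≠ 0) :
    rootCurve y = -((y / sin y : ℝ) * Complex.exp ((-y : ℝ) * Complex.I)) := by
  apply Complex.ext
  · rw [Complex.neg_re, Complex.re_ofReal_mul, Complex.exp_ofReal_mul_I_re, Real.cos_neg,
      rootCurve, Real.cot_eq_cos_div_sin, ← mul_div_assoc, div_mul_eq_mul_div]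
  · rw [Complex.neg_im, Complex.im_ofReal_mul, Complex.exp_ofReal_mul_I_im, Real.sin_neg,
      rootCurve, mul_neg, neg_neg, div_mul_cancel₀ y hy]

lemma rootCurve_mul_exp (hy : sin y ≠ 0) :
    rootCurve y * Complex.exp (rootCurve y) = -(rootGain y : ℂ) := by
  have hexp : Complex.exp (rootCurve y) =
      Real.exp (-(y * cot y)) * Complex.exp (y * Complex.I) := by
    rw [Complex.ofReal_exp, ← Complex.exp_add, ← Complex.mk_eq_add_mul_I, rootCurve]
  calc rootCurve y * Complex.exp (rootCurve y)
      = -(rootGain y * (Complex.exp ((-y : ℝ) * Complex.I) * Complex.exp (y * Complex.I))) := by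
        rw [hexp, rootCurve_eq_neg_mul_exp hy, rootGain]
        push_cast
        ring
    _ = -(rootGain y : ℂ) := by
        rw [← Complex.exp_add, Complex.ofReal_neg, neg_mul, neg_add_cancel, Complex.exp_zero,
          mul_one]

lemma rootCurve_re_nonneg (hy : y ∈ Icc (π / 2) π) : 0 ≤ (rootCurve y).re := by
  have hy₀ : 0 ≤ y := Real.pi_div_two_pos.le.trans hy.1
  have hcot : cot y ≤ 0 := by
    rw [Real.cot_eq_cos_div_sin]
    exact div_nonpos_of_nonpos_of_nonneg
      (Real.cos_nonpos_of_pi_div_two_le_of_le hy.1 (by linarith [hy.2, Real.pi_pos]))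
      (Real.sin_nonneg_of_nonneg_of_le_pi hy₀ hy.2)
  exact neg_nonneg.mpr (mul_nonpos_of_nonneg_of_nonpos hy₀ hcot)

lemma continuousOn_rootGain : ContinuousOn rootGain {y | sin y ≠ 0} := by
  unfold rootGain
  simp only [Real.cot_eq_cos_div_sin]
  fun_prop (disch := simp)

lemma rootGain_pi_div_two : rootGain (π / 2) = π / 2 := by
  simp [rootGain, Real.cot_eq_cos_div_sin]

lemma div_sin_le_rootGain (hy : y ∈ Icc (π / 2) π) : y / sin y ≤ rootGain y := by
  have hy₀ : 0 ≤ y := Real.pi_div_two_pos.le.trans hy.1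
  exact le_mul_of_one_le_right
    (div_nonneg hy₀ (Real.sin_nonneg_of_nonneg_of_le_pi hy₀ hy.2))
    (Real.one_le_exp (rootCurve_re_nonneg hy))

lemma sin_pos_of_mem_Ico_pi_div_two_pi (hy : y ∈ Ico (π / 2) π) : 0 < sin y :=
  Real.sin_pos_of_pos_of_lt_pi (Real.pi_div_two_pos.trans_le hy.1) hy.2

lemma exists_le_rootGain (ha : π / 2 ≤ a) : ∃ y ∈ Ico (π / 2) π, a ≤ rootGain y := by
  have ha₀ : 0 < a := Real.pi_div_two_pos.trans_le ha
  -- `y / sin y ≥ a` as soon as `y ≥ π / 2` and `sin y = sin (π - y) ≤ π - y = π / 2 / a`.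
  set t : ℝ := π / 2 / a with ht
  have ht₀ : 0 < t := by positivity
  have ht₁ : t ≤ 1 := (div_le_one ha₀).mpr ha
  have hy : π - t ∈ Ico (π / 2) π := ⟨by linarith [Real.two_le_pi], by linarith⟩
  refine ⟨π - t, hy, ?_⟩
  calc a = π / 2 / t := by rw [ht, div_div_cancel₀ Real.pi_div_two_pos.ne']
    _ ≤ (π - t) / sin (π - t) := by
        have hsin := sin_pos_of_mem_Ico_pi_div_two_pi hy
        have hsin_le : sin (π - t) ≤ t := by
          rw [Real.sin_pi_sub]
          exact Real.sin_le ht₀.le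
        gcongr
        · exact Real.pi_div_two_pos.le.trans hy.1
        · exact hy.1
    _ ≤ rootGain (π - t) := div_sin_le_rootGain (Ico_subset_Icc_self hy)

lemma surjOn_rootGain : SurjOn rootGain (Ico (π / 2) π) (Ici (π / 2)) := by
  intro a ha
  obtain ⟨b, hb, hab⟩ := exists_le_rootGain ha
  have hsub : Icc (π / 2) b ⊆ Ico (π / 2) π := Icc_subset_Ico_right hb.2
  have hcont : ContinuousOn rootGain (Icc (π / 2) b) :=
    continuousOn_rootGain.mono fun y hy => (sin_pos_of_mem_Ico_pi_div_two_pi (hsub hy)).ne'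
  exact image_mono hsub
    (intermediate_value_Icc hb.1 hcont ⟨rootGain_pi_div_two.trans_le ha, hab⟩)

lemma exists_re_nonneg_mul_exp_eq_neg (ha : π / 2 ≤ a) :
    ∃ z : ℂ, 0 ≤ z.re ∧ z * Complex.exp z = -a := by
  obtain ⟨y, hy, rfl⟩ := surjOn_rootGain ha
  exact ⟨rootCurve y, rootCurve_re_nonneg (Ico_subset_Icc_self hy),
    rootCurve_mul_exp (sin_pos_of_mem_Ico_pi_div_two_pi hy).ne'⟩

end LargeGain

lemma forall_mul_exp_eq_neg_re_neg_iff {a : ℝ} (ha : 0 < a) :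
    (∀ z : ℂ, z * Complex.exp z = -a → z.re < 0) ↔ a < π / 2 := by
  refine ⟨fun h => ?_, fun h z => re_neg_of_mul_exp_eq_neg ha h⟩
  by_contra! hle
  obtain ⟨z, hre, hz⟩ := exists_re_nonneg_mul_exp_eq_neg hle
  exact (h z hz).not_ge hre

lemma add_mul_exp_eq_zero_iff {k s τ : ℂ} (hτ : τ ≠ 0) :
    k + s * Complex.exp (s * τ) = 0 ↔ s * τ * Complex.exp (s * τ) = -(k * τ) := by
  rw [add_comm, add_eq_zero_iff_eq_neg, mul_right_comm, ← neg_mul, mul_left_inj' hτ]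

lemma forall_add_mul_exp_eq_zero_re_neg_iff {k τ : ℝ} (hk : 0 < k) (hτ : 0 < τ) :
    (∀ s : ℂ, k + s * Complex.exp (s * τ) = 0 → s.re < 0) ↔ k * τ < π / 2 := by
  have hτ' : (τ : ℂ) ≠ 0 := Complex.ofReal_ne_zero.mpr hτ.ne'
  rw [← forall_mul_exp_eq_neg_re_neg_iff (mul_pos hk hτ)]
  refine ((mul_right_surjective₀ hτ').forall.trans <| forall_congr' fun s => ?_).symm
  rw [add_mul_exp_eq_zero_iff hτ', Complex.ofReal_mul, Complex.re_mul_ofReal,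
    ← lt_div_iff₀ hτ, zero_div]

/-- For `r > 0`, `L > 0`, `k_I > 0`, every complex root `s` of the
characteristic equation `k_I + s·e^{sL/r} = 0` has negative real part
if and only if `k_I < rπ/(2L)`. -/
theorem all_poles_neg_re_iff (r L kI : ℝ) (hr : 0 < r) (hL : 0 < L) (hk : 0 < kI) :
    (∀ s : ℂ, (kI : ℂ) + s * Complex.exp (s * (L : ℂ) / (r : ℂ)) = 0 → s.re < 0) ↔
      kI < r * Real.pi / (2 * L) := by
  have hgain : π / 2 / (L / r) = r * π / (2 * L) := by field_simp
  simp only [mul_div_assoc, ← Complex.ofReal_div]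
  rw [forall_add_mul_exp_eq_zero_re_neg_iff hk (div_pos hL hr), ← lt_div_iff₀ (div_pos hL hr),
    hgain, mul_div_assoc]
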